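/- Let Δ = n² + 4 for an integer n ≥ 1. (1) If n is even, O_Δ is a maximal order (Δ is a fundamental discriminant), and the class number h_Δ = 1, then n = 2 (so Δ = 8). (2) If n ≡ 2 (mod 4) and n ≥ 6, then the class number h_Δ is even, regardless of whether O_Δ is maximal. -/

import Mathlib

noncomputable section

/-- A complex square root of an integer `d`. -/
def sqrtD (d : ℤ) : ℂ :=
  if 0 ≤ d then ((Real.sqrt d : ℝ) : ℂ) else Complex.I * ((Real.sqrt (-d) : ℝ) : ℂ)

/-- The element `(Δ + √Δ)/2` generating the quadratic order of discriminant `Δ`. -/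
def omegaD (d : ℤ) : ℂ := ((d : ℂ) + sqrtD d) / 2

/-- The quadratic order `O_Δ = ℤ[(Δ + √Δ)/2]` of discriminant `Δ`, as a subring of `ℂ`. -/
def QOrder (d : ℤ) : Subring ℂ := Subring.closure {omegaD d}

/-- The class number `h_Δ`: the order of the (wide) class group of `O_Δ`,
the group of invertible fractional ideals modulo principal fractional ideals. -/
def classNumber (d : ℤ) : ℕ := Nat.card (ClassGroup (QOrder d))

/-- `O_Δ` is a maximal order: every element of `ℚ(√Δ)` (the subfield of `ℂ` generated by
`(Δ+√Δ)/2`) that is integral over `ℤ` already lies in `O_Δ`. -/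
def IsMaximalOrder (d : ℤ) : Prop :=
  ∀ x ∈ Subfield.closure {omegaD d}, IsIntegral ℤ x → x ∈ QOrder d

/-!
For `n = 2m` we have `n² + 4 = 4(m² + 1)` and `O_Δ = ℤ[√D]` with `D = m² + 1`. If `m` is even then
`D ≡ 1 (mod 4)`, so `(1 + √D) / 2` is integral and `O_Δ` is not maximal. If `m` is odd then `2`
divides `D` exactly once, so the ideal `(2, √D)` squares to `(2)`; were it principal, its generator
would have norm `±2`. The fundamental unit `m + √D` rules this out: multiplying by its conjugate
shrinks the `√D`-coordinate of any element whose norm is less than `2m` in absolute value, so by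
descent such a norm is, up to sign, the square of an integer. Hence `(2, √D)` has order two in the
class group as soon as `m ≥ 2`.
-/

theorem even_natCard_of_orderOf_eq_two {G : Type*} [Group G] {c : G} (hc : orderOf c = 2) :
    Even (Nat.card G) :=
  even_iff_two_dvd.mpr (hc ▸ orderOf_dvd_natCard c)

theorem span_pair_mul_self_of_isCoprime {R : Type*} [CommRing R] {p k s : R}
    (hs : s * s = p * k) (hpk : IsCoprime p k) :
    Ideal.span {p, s} * Ideal.span {p, s} = Ideal.span {p} := by
  rw [Ideal.span_pair_mul_span_pair]
  apply le_antisymm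
  · rw [Ideal.span_le]
    rintro x (rfl | rfl | rfl | rfl)
    · exact Ideal.mem_span_singleton.mpr (dvd_mul_right p p)
    · exact Ideal.mem_span_singleton.mpr (dvd_mul_right p s)
    · exact Ideal.mem_span_singleton.mpr (dvd_mul_left p s)
    · exact Ideal.mem_span_singleton.mpr ⟨k, hs⟩
  · obtain ⟨a, b, hab⟩ := hpk
    have hp : p = a * (p * p) + b * (s * s) := by linear_combination (-p) * hab - b * hs
    have hmem : a * (p * p) + b * (s * s) ∈ Ideal.span {p * p, p * s, s * p, s * s} :=
      add_mem (Ideal.mul_mem_left _ _ (Ideal.subset_span (by simp)))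
        (Ideal.mul_mem_left _ _ (Ideal.subset_span (by simp)))
    rwa [← hp, ← Ideal.span_singleton_le_iff_mem] at hmem

theorem isUnit_coeIdeal_of_mul_eq_span_singleton {R K : Type*} [CommRing R] [Field K] [Algebra R K]
    [IsFractionRing R K] {I J : Ideal R} {a : R} (ha : a ≠ 0) (hIJ : I * J = Ideal.span {a}) :
    IsUnit (I : FractionalIdeal (nonZeroDivisors R) K) := by
  have haK : algebraMap R K a ≠ 0 :=
    (map_ne_zero_iff _ (IsFractionRing.injective R K)).mpr ha
  refine isUnit_of_mul_isUnit_left (y := (J : FractionalIdeal (nonZeroDivisors R) K)) ?_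
  rw [← FractionalIdeal.coeIdeal_mul, hIJ, FractionalIdeal.coeIdeal_span_singleton]
  exact ⟨toPrincipalIdeal R K (Units.mk0 _ haK), coe_toPrincipalIdeal _⟩

theorem exists_classGroup_orderOf_eq_two {R : Type*} [CommRing R] [IsDomain R] {I : Ideal R} {a : R}
    (ha : a ≠ 0) (hI : I * I = Ideal.span {a}) (hprin : ¬ I.IsPrincipal) :
    ∃ c : ClassGroup R, orderOf c = 2 := by
  obtain ⟨u, hu⟩ := isUnit_coeIdeal_of_mul_eq_span_singleton (K := FractionRing R) ha hI
  refine ⟨ClassGroup.mk (FractionRing R) u, orderOf_eq_prime ?_ fun h => ?_⟩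
  · rw [← map_pow]
    refine (ClassGroup.mk_eq_one_of_coe_ideal (I' := I * I) ?_).mpr ⟨a, ha, hI⟩
    rw [pow_two, Units.val_mul, hu, FractionalIdeal.coeIdeal_mul]
  · obtain ⟨x, -, hx⟩ := (ClassGroup.mk_eq_one_of_coe_ideal hu).mp h
    exact hprin ⟨x, hx⟩

theorem abs_norm_eq_of_associated_mul_self {d p : ℤ} {x : ℤ√d}
    (h : Associated (x * x) (p : ℤ√d)) : |x.norm| = |p| := by
  have hnorm : Associated (x.norm * x.norm) (p * p) := by
    rw [← Zsqrtd.norm_mul, ← Zsqrtd.norm_intCast (d := d)]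
    exact h.map Zsqrtd.normMonoidHom
  rwa [Int.associated_iff_natAbs, Int.natAbs_mul, Int.natAbs_mul, Nat.mul_self_inj,
    Int.natAbs_eq_natAbs_iff, ← abs_eq_abs] at hnorm

theorem not_isSquare_sq_add_one {m : ℤ} (hm : m ≠ 0) : ¬ IsSquare (m ^ 2 + 1) := by
  rintro ⟨r, hr⟩
  have hlt : |m| < |r| := sq_lt_sq.mp (by linarith)
  have hle : (|m| + 1) ^ 2 ≤ |r| ^ 2 := pow_le_pow_left₀ (by positivity) hlt 2
  have hpos : 0 < |m| := abs_pos.mpr hm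
  rw [sq_abs] at hle
  linarith [sq_abs m]

theorem abs_mul_sub_lt_of_abs_norm_lt {m x y : ℤ} (hx : 0 ≤ x) (hy : 0 < y)
    (h : |x ^ 2 - (m ^ 2 + 1) * y ^ 2| < 2 * m) : |m * y - x| < y := by
  have hm : 0 < m := by linarith [abs_nonneg (x ^ 2 - (m ^ 2 + 1) * y ^ 2)]
  obtain ⟨hlower, hupper⟩ := abs_lt.mp h
  have hmy : 2 * m ≤ 2 * m * y ^ 2 := le_mul_of_one_le_right (by positivity) (one_le_pow₀ hy)
  have hx_lt : x < (m + 1) * y := by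
    by_contra! hle
    have := pow_le_pow_left₀ (by positivity) hle 2
    linarith
  have hlt_x : (m - 1) * y < x := by
    by_contra! hle
    have := pow_le_pow_left₀ hx hle 2
    linarith
  rw [abs_lt]
  constructor <;> linarith

theorem exists_abs_norm_eq_abs_im_lt {m : ℤ} {z : ℤ√(m ^ 2 + 1)} (hz : |z.norm| < 2 * m)
    (him : z.im ≠ 0) : ∃ w : ℤ√(m ^ 2 + 1), |w.norm| = |z.norm| ∧ |w.im| < |z.im| := by
  have hnorm : z.norm = |z.re| ^ 2 - (m ^ 2 + 1) * |z.im| ^ 2 := by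
    rw [Zsqrtd.norm_def, sq_abs, sq_abs]
    ring
  refine ⟨⟨|z.re|, |z.im|⟩ * ⟨m, -1⟩, ?_, ?_⟩
  · rw [← abs_neg, hnorm]
    congr 1
    simp only [Zsqrtd.norm_def, Zsqrtd.re_mul, Zsqrtd.im_mul]
    ring
  · have := abs_mul_sub_lt_of_abs_norm_lt (abs_nonneg z.re) (abs_pos.mpr him) (hnorm ▸ hz)
    rw [Zsqrtd.im_mul]
    convert this using 2
    ring

theorem isSquare_abs_norm_of_abs_norm_lt {m : ℤ} (z : ℤ√(m ^ 2 + 1)) (hz : |z.norm| < 2 * m) :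
    IsSquare |z.norm| := by
  by_cases him : z.im = 0
  · exact ⟨|z.re|, by simp [Zsqrtd.norm_def, him]⟩
  · obtain ⟨w, hw, _⟩ := exists_abs_norm_eq_abs_im_lt hz him
    exact hw ▸ isSquare_abs_norm_of_abs_norm_lt w (hw ▸ hz)
termination_by z.im.natAbs
decreasing_by zify; assumption

theorem exists_classGroup_zsqrtd_orderOf_eq_two {m p k : ℤ} [IsDomain (ℤ√(m ^ 2 + 1))]
    (hpk : m ^ 2 + 1 = p * k) (hcop : IsCoprime p k) (hlt : |p| < 2 * m) (hp : ¬ IsSquare |p|) :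
    ∃ c : ClassGroup (ℤ√(m ^ 2 + 1)), orderOf c = 2 := by
  have hI := span_pair_mul_self_of_isCoprime (R := ℤ√(m ^ 2 + 1)) (s := Zsqrtd.sqrtd)
    (by rw [Zsqrtd.dmuld, hpk, Int.cast_mul]) hcop.intCast
  have hp0 : (p : ℤ√(m ^ 2 + 1)) ≠ 0 := by
    rw [Int.cast_ne_zero]
    rintro rfl
    exact hp (by simp)
  refine exists_classGroup_orderOf_eq_two hp0 hI ?_
  rintro ⟨x, hx⟩
  rw [hx, Ideal.submodule_span_eq, Ideal.span_singleton_mul_span_singleton,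
    Ideal.span_singleton_eq_span_singleton] at hI
  have hnorm := abs_norm_eq_of_associated_mul_self hI
  exact hp (hnorm ▸ isSquare_abs_norm_of_abs_norm_lt x (hnorm ▸ hlt))

theorem sqrtD_mul_self (d : ℤ) : sqrtD d * sqrtD d = d := by
  rw [sqrtD]
  split_ifs with hd
  · rw [← Complex.ofReal_mul, Real.mul_self_sqrt (by exact_mod_cast hd), Complex.ofReal_intCast]
  · have hneg : (0 : ℝ) ≤ -d := by exact_mod_cast (by linarith : 0 ≤ -d)
    rw [mul_mul_mul_comm, Complex.I_mul_I, ← Complex.ofReal_mul, Real.mul_self_sqrt hneg]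
    push_cast
    ring

theorem sqrtD_four_mul_div_two_mul_self (D : ℤ) :
    sqrtD (4 * D) / 2 * (sqrtD (4 * D) / 2) = D := by
  rw [div_mul_div_comm, sqrtD_mul_self]
  push_cast
  ring

theorem omegaD_four_mul (D : ℤ) : omegaD (4 * D) = (2 * D : ℤ) + sqrtD (4 * D) / 2 := by
  rw [omegaD]
  push_cast
  ring

theorem sqrtD_four_mul_div_two_mem_iff {S : Type*} [SetLike S ℂ] [SubringClass S ℂ] (A : S)
    (D : ℤ) : sqrtD (4 * D) / 2 ∈ A ↔ omegaD (4 * D) ∈ A := by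
  rw [omegaD_four_mul, add_mem_cancel_left (intCast_mem A _)]

/-- The ring homomorphism `ℤ√D →+* ℂ` sending `√D` to `√(4D) / 2`; this choice of square root
matches the generator `omegaD (4 * D)` of the order of discriminant `4D`. -/
def zsqrtdToComplex (D : ℤ) : ℤ√D →+* ℂ :=
  Zsqrtd.lift ⟨sqrtD (4 * D) / 2, sqrtD_four_mul_div_two_mul_self D⟩

theorem zsqrtdToComplex_apply {D : ℤ} (z : ℤ√D) :
    zsqrtdToComplex D z = z.re + z.im * (sqrtD (4 * D) / 2) :=
  rfl

theorem zsqrtdToComplex_injective {D : ℤ} (hD : ¬ IsSquare D) :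
    Function.Injective (zsqrtdToComplex D) :=
  Zsqrtd.lift_injective _ fun n hn => hD ⟨n, hn⟩

theorem qOrder_four_mul (D : ℤ) : QOrder (4 * D) = (zsqrtdToComplex D).range := by
  apply le_antisymm
  · rw [QOrder, Subring.closure_le, Set.singleton_subset_iff]
    exact ⟨⟨2 * D, 1⟩, by simp [zsqrtdToComplex_apply, omegaD_four_mul]⟩
  · rintro _ ⟨z, rfl⟩
    have hroot : sqrtD (4 * D) / 2 ∈ QOrder (4 * D) :=
      (sqrtD_four_mul_div_two_mem_iff _ D).mpr (Subring.subset_closure rfl)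
    rw [zsqrtdToComplex_apply]
    exact add_mem (intCast_mem _ _) (mul_mem (intCast_mem _ _) hroot)

/-- For nonsquare `D`, the quadratic order of discriminant `4D` is `ℤ[√D]`. -/
def zsqrtdEquivQOrder {D : ℤ} (hD : ¬ IsSquare D) : ℤ√D ≃+* QOrder (4 * D) :=
  (RingEquiv.ofBijective (zsqrtdToComplex D).rangeRestrict
    ⟨fun _ _ h => zsqrtdToComplex_injective hD (congrArg Subtype.val h),
      (zsqrtdToComplex D).rangeRestrict_surjective⟩).trans
    (RingEquiv.subringCongr (qOrder_four_mul D).symm)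

theorem exists_classGroup_qOrder_orderOf_eq_two {m p k : ℤ} (hpk : m ^ 2 + 1 = p * k)
    (hcop : IsCoprime p k) (hlt : |p| < 2 * m) (hp : ¬ IsSquare |p|) :
    ∃ c : ClassGroup (QOrder (4 * (m ^ 2 + 1))), orderOf c = 2 := by
  have hm : m ≠ 0 := by
    rintro rfl
    exact (abs_nonneg p).not_gt hlt
  let e := zsqrtdEquivQOrder (not_isSquare_sq_add_one hm)
  have : IsDomain (ℤ√(m ^ 2 + 1)) := e.toMulEquiv.isDomain
  obtain ⟨c, hc⟩ := exists_classGroup_zsqrtd_orderOf_eq_two hpk hcop hlt hp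
  exact ⟨ClassGroup.mulEquiv e c, (MulEquiv.orderOf_eq _ c).trans hc⟩

theorem isIntegral_one_add_div_two {K : Type*} [Field K] [NeZero (2 : K)] {r : K} {j : ℤ}
    (hr : r * r = (4 * j + 1 : ℤ)) : IsIntegral ℤ ((1 + r) / 2) := by
  refine ⟨Polynomial.X ^ 2 - Polynomial.X - Polynomial.C j, by monicity!, ?_⟩
  have h2 : (2 : K) ≠ 0 := two_ne_zero
  rw [Polynomial.eval₂_sub, Polynomial.eval₂_sub, Polynomial.eval₂_pow, Polynomial.eval₂_X,
    Polynomial.eval₂_C, eq_intCast]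
  push_cast at hr
  field_simp
  linear_combination hr

theorem not_isMaximalOrder_four_mul {D : ℤ} (hmod : D % 4 = 1) (hD : ¬ IsSquare D) :
    ¬ IsMaximalOrder (4 * D) := by
  intro hmax
  have hint : IsIntegral ℤ ((1 + sqrtD (4 * D) / 2) / 2) :=
    isIntegral_one_add_div_two (j := D / 4) <| by
      rw [sqrtD_four_mul_div_two_mul_self, show 4 * (D / 4) + 1 = D by omega]
  have hroot : sqrtD (4 * D) / 2 ∈ Subfield.closure {omegaD (4 * D)} :=
    (sqrtD_four_mul_div_two_mem_iff _ D).mpr (Subfield.subset_closure rfl)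
  have hmem := hmax _ (div_mem (add_mem (one_mem _) hroot) (ofNat_mem _ 2)) hint
  rw [qOrder_four_mul] at hmem
  obtain ⟨z, hz⟩ := hmem
  have htwo : 2 * z = ⟨1, 1⟩ := zsqrtdToComplex_injective hD <| by
    rw [map_mul, hz, map_ofNat, zsqrtdToComplex_apply]
    push_cast
    ring
  have hre : 2 * z.re = 1 := by simpa [two_mul] using congrArg Zsqrtd.re htwo
  omega

theorem classNumber_add_even_cases_general :
    (∀ n : ℤ, 1 ≤ n → Even n → IsMaximalOrder (n ^ 2 + 4) →
      Odd (classNumber (n ^ 2 + 4)) → n = 2) ∧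
    (∀ n : ℤ, n % 4 = 2 → 6 ≤ n →
      ∃ c : ClassGroup (QOrder (n ^ 2 + 4)), orderOf c = 2) := by
  have hdisc (m : ℤ) : (2 * m) ^ 2 + 4 = 4 * (m ^ 2 + 1) := by ring
  have horder_two (n : ℤ) (hn : n % 4 = 2) (h6 : 6 ≤ n) :
      ∃ c : ClassGroup (QOrder (n ^ 2 + 4)), orderOf c = 2 := by
    obtain ⟨j, rfl⟩ : ∃ j, n = 2 * (2 * j + 1) := ⟨n / 4, by omega⟩
    have htwo : ¬ IsSquare |(2 : ℤ)| := by
      rw [abs_two]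
      exact Int.prime_two.irreducible.not_isSquare
    rw [hdisc]
    exact exists_classGroup_qOrder_orderOf_eq_two (p := 2) (k := 2 * (j ^ 2 + j) + 1) (by ring)
      ⟨-(j ^ 2 + j), 1, by ring⟩ (by rw [abs_two]; omega) htwo
  refine ⟨fun n h1 heven hmax hodd => ?_, horder_two⟩
  by_contra hne
  obtain ⟨m, rfl⟩ := even_iff_exists_two_mul.mp heven
  rcases Int.even_or_odd' m with ⟨j, rfl | rfl⟩
  · rw [hdisc] at hmax
    have hmod : ((2 * j) ^ 2 + 1) % 4 = 1 := by ring_nf; omega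
    exact not_isMaximalOrder_four_mul hmod (not_isSquare_sq_add_one (by omega)) hmax
  · obtain ⟨_, hc⟩ := horder_two (2 * (2 * j + 1)) (by omega) (by omega)
    exact Nat.not_even_iff_odd.mpr hodd (even_natCard_of_orderOf_eq_two hc)

/-- Let `Δ = n² + 4` for `n ≥ 1`. (1) If `n` is even, `O_Δ` is maximal and `h_Δ = 1`,
then `n = 2` (so `Δ = 8`). (2) If `n ≡ 2 (mod 4)` and `n ≥ 6`, then `h_Δ` is even,
regardless of maximality. -/
theorem classNumber_add_even_cases :
    (∀ n : ℤ, 1 ≤ n → Even n → IsMaximalOrder (n ^ 2 + 4) →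
      classNumber (n ^ 2 + 4) = 1 → n = 2) ∧
    (∀ n : ℤ, n % 4 = 2 → 6 ≤ n → Even (classNumber (n ^ 2 + 4))) :=
  ⟨fun n h1 heven hmax hc =>
      classNumber_add_even_cases_general.1 n h1 heven hmax (hc ▸ odd_one),
    fun n hn h6 => (classNumber_add_even_cases_general.2 n hn h6).elim
      fun _ hc => even_natCard_of_orderOf_eq_two hc⟩
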